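/- Let (A, M) be a commutative local ring with maximal ideal M, let E be an A-module with ME = 0 which is finitely generated as an A-module, and let R := A ⋉ E be the trivial ring extension of A by E. If R is weakly coherent, then A is weakly coherent. -/

import Mathlib

/-!
Since `M E = 0`, every proper ideal `I` of `A` gives an ideal `I ⋉ 0` of `R = A ⋉ E`, and as an
`R`-module `I ⋉ 0` is just `I` with scalars restricted along the projection `R → A`. The kernel
`0 ⋉ E` of this projection is a finitely generated ideal because `E` is finitely generated, so `A`
is a finitely presented `R`-module, and therefore an `A`-module is finitely presented over `A` if
and only if it is finitely presented over `R`. Weak coherence of `R`, applied to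
`I ⋉ 0 ⊆ J ⋉ 0`, thus gives weak coherence of `A`.
-/

def IsWeaklyCoherentRing (R : Type*) [CommRing R] : Prop :=
  ∀ I J : Ideal R, I ≤ J → I ≠ ⊤ → J ≠ ⊤ → I.FG →
    Module.FinitePresentation R J → Module.FinitePresentation R I

/-- Finite presentation ascends along a finite algebra: an `S`-module finitely presented over `R`
is finitely presented over `S`. -/
lemma finitePresentation_of_restrictScalars (R S M : Type*) [CommRing R] [CommRing S] [Algebra R S]
    [Module.Finite R S] [AddCommGroup M] [Module R M] [Module S M] [IsScalarTower R S M]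
    [Module.FinitePresentation R M] : Module.FinitePresentation S M := by
  have : Module.Finite S M := Module.Finite.of_restrictScalars_finite R S M
  obtain ⟨n, f, hf⟩ := Module.Finite.exists_fin' S M
  refine Module.finitePresentation_of_surjective f hf ?_
  have h := Module.FinitePresentation.fg_ker (f.restrictScalars R) hf
  exact Submodule.FG.of_restrictScalars R h

section

variable {A E : Type*} [CommRing A]
    [AddCommGroup E] [Module A E] [Module Aᵐᵒᵖ E] [IsCentralScalar A E]

/-- The structure of `A ⋉ E`-algebra on `A` given by the projection `A ⋉ E → A`. -/
abbrev fstAlgebra (A E : Type*) [CommRing A]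
    [AddCommGroup E] [Module A E] [Module Aᵐᵒᵖ E] [IsCentralScalar A E] :
    Algebra (TrivSqZeroExt A E) A :=
  (TrivSqZeroExt.fstHom A A E).toRingHom.toAlgebra

attribute [local instance] fstAlgebra

/-- `A` is the quotient of `A ⋉ E` by the finitely generated ideal `0 ⋉ E`. -/
lemma finitePresentation_fst [Module.Finite A E] :
    Module.FinitePresentation (TrivSqZeroExt A E) A := by
  refine Module.finitePresentation_of_surjective (Algebra.linearMap (TrivSqZeroExt A E) A)
    (fun a => ⟨TrivSqZeroExt.inl a, rfl⟩) ?_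
  have hker : ((LinearMap.ker (Algebra.linearMap (TrivSqZeroExt A E) A)).restrictScalars A) =
      LinearMap.range (TrivSqZeroExt.inrHom A E) := by
    ext x
    constructor
    · intro hx
      exact ⟨x.snd, TrivSqZeroExt.ext (show x.fst = 0 from hx).symm rfl⟩
    · rintro ⟨e, rfl⟩
      rfl
  refine Submodule.FG.of_restrictScalars A ?_
  rw [hker, LinearMap.range_eq_map]
  exact Module.Finite.fg_top.map _

/-- The ideal `I ⋉ 0` of `A ⋉ E`, for an ideal `I` of `A` contained in the annihilator of `E`. -/
def idealInl (I : Ideal A) (hI : ∀ a ∈ I, ∀ e : E, a • e = 0) : Ideal (TrivSqZeroExt A E) where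
  carrier := {x | x.fst ∈ I ∧ x.snd = 0}
  zero_mem' := ⟨I.zero_mem, rfl⟩
  add_mem' {x y} hx hy := ⟨I.add_mem hx.1 hy.1, by simp [hx.2, hy.2]⟩
  smul_mem' r x hx := ⟨I.mul_mem_left _ hx.1, by simp [hx.2, hI _ hx.1]⟩

/-- `I ⋉ 0` is `I`, with scalars restricted along `A ⋉ E → A`. -/
def idealInlEquiv (I : Ideal A) (hI : ∀ a ∈ I, ∀ e : E, a • e = 0) :
    idealInl I hI ≃ₗ[TrivSqZeroExt A E] I where
  toFun x := ⟨x.1.fst, x.2.1⟩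
  invFun a := ⟨TrivSqZeroExt.inl a.1, a.2, rfl⟩
  map_add' _ _ := rfl
  map_smul' _ _ := rfl
  left_inv x := Subtype.ext (TrivSqZeroExt.ext rfl x.2.2.symm)
  right_inv _ := rfl

lemma idealInl_ne_top {I : Ideal A} (hI : ∀ a ∈ I, ∀ e : E, a • e = 0) (h : I ≠ ⊤) :
    idealInl I hI ≠ ⊤ := fun ht =>
  h ((Ideal.eq_top_iff_one I).2 ((Ideal.eq_top_iff_one _).1 ht).1)

lemma isWeaklyCoherentRing_of_trivSqZeroExt [IsLocalRing A]
    (hME : ∀ a ∈ IsLocalRing.maximalIdeal A, ∀ e : E, a • e = 0) [Module.Finite A E]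
    (hR : IsWeaklyCoherentRing (TrivSqZeroExt A E)) : IsWeaklyCoherentRing A := by
  intro I J hIJ hI hJ hIfg hJfp
  have hJE : ∀ a ∈ J, ∀ e : E, a • e = 0 := fun a ha =>
    hME a (IsLocalRing.le_maximalIdeal hJ ha)
  have hIE : ∀ a ∈ I, ∀ e : E, a • e = 0 := fun a ha => hJE a (hIJ ha)
  have hA : Module.FinitePresentation (TrivSqZeroExt A E) A := finitePresentation_fst
  have hJR : Module.FinitePresentation (TrivSqZeroExt A E) J := .trans _ _ A
  have hIA : Module.Finite A I := Module.Finite.iff_fg.2 hIfg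
  have hIR : Module.Finite (TrivSqZeroExt A E) I := .trans A I
  have hI' : Module.FinitePresentation (TrivSqZeroExt A E) (idealInl I hIE) :=
    hR (idealInl I hIE) (idealInl J hJE) (fun x hx => ⟨hIJ hx.1, hx.2⟩)
      (idealInl_ne_top hIE hI) (idealInl_ne_top hJE hJ)
      (Module.Finite.iff_fg.1 (.equiv (idealInlEquiv I hIE).symm))
      (.of_equiv (idealInlEquiv J hJE).symm)
  have : Module.FinitePresentation (TrivSqZeroExt A E) I := .of_equiv (idealInlEquiv I hIE)
  exact finitePresentation_of_restrictScalars (TrivSqZeroExt A E) A I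

end

theorem weaklyCoherent_base_of_trivSqZeroExt (A E : Type*) [CommRing A] [IsLocalRing A]
    [AddCommGroup E] [Module A E] [Module Aᵐᵒᵖ E] [IsCentralScalar A E]
    (hME : ∀ a ∈ IsLocalRing.maximalIdeal A, ∀ e : E, a • e = 0)
    (hE : Module.Finite A E)
    (hR : IsWeaklyCoherentRing (TrivSqZeroExt A E)) :
    IsWeaklyCoherentRing A :=
  isWeaklyCoherentRing_of_trivSqZeroExt hME hR
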